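/- For all η,η' ∈ ℂ and all w,y,z ∈ ℤ/3ℤ with y ≠ z, one has (1/3)·(M^{w0/yz}[η,η'] + M^{w1/yz}[η,η'] + M^{w2/yz}[η,η']) = (1/3)·J^{w+y+z} + (2/3)·J^{w−y}. -/

import Mathlib

noncomputable def ω : ℂ := Complex.exp (2 * Real.pi * Complex.I / 3)

def J : Matrix (Fin 3) (Fin 3) ℂ := !![0,1,0; 0,0,1; 1,0,0]

noncomputable def W : Matrix (Fin 3) (Fin 3) ℂ := !![1,1,1; 1,ω,ω^2; 1,ω^2,ω]

/-- generalized cevian operator `S[η,η'] = W ⬝ diag(1,η',η) ⬝ W⁻¹` -/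
noncomputable def S (η η' : ℂ) : Matrix (Fin 3) (Fin 3) ℂ :=
  W * Matrix.diagonal ![1, η', η] * W⁻¹

/-- `ω^k` for `k : ZMod 3` (well defined since `ω^3 = 1`). -/
noncomputable def ωz (k : ZMod 3) : ℂ := ω ^ k.val

/-- `J^k` for `k : ZMod 3` (well defined since `J^3 = 1`). -/
def Jz (k : ZMod 3) : Matrix (Fin 3) (Fin 3) ℂ := J ^ k.val

/-- generalized median operator `M^{wx/yz}[η,η']` -/
noncomputable def M (η η' : ℂ) (w x y z : ZMod 3) : Matrix (Fin 3) (Fin 3) ℂ :=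
  S ((η * ωz (-x) - ωz (-w)) / (ωz (-z) - ωz (-y)))
    ((η' * ωz x - ωz w) / (ωz z - ωz y))

/-!
Conjugation by `W` diagonalizes both sides: the powers of `J` are the cevian operators
`J ^ k = S[ω⁻ᵏ, ωᵏ]`, and `S[η, η']` depends affinely on `(η, η')`. So it suffices to compare
eigenvalues. Averaging those of the medians over `x` kills the terms in `η` and `η'`, because
`1 + ω + ω² = 0`, and what is left is computed by the identity `3 / (b - c) = b c + 2 b⁻¹` for
distinct cube roots of unity `b` and `c`.
-/

theorem inv_eq_sq_of_pow_three_eq_one {G : Type*} [DivisionMonoid G] {a : G} (ha : a ^ 3 = 1) :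
    a⁻¹ = a ^ 2 :=
  inv_eq_of_mul_eq_one_right (by rw [← pow_succ', ha])

theorem three_div_sub_of_pow_three_eq_one {K : Type*} [Field K] {b c : K} (hb : b ^ 3 = 1)
    (hc : c ^ 3 = 1) (hbc : b ≠ c) : 3 / (b - c) = b * c + 2 * b⁻¹ := by
  have hsub : b - c ≠ 0 := sub_ne_zero.2 hbc
  have hquad : b ^ 2 + b * c + c ^ 2 = 0 := by
    refine (mul_eq_zero.1 ?_).resolve_left hsub
    linear_combination hb - hc
  rw [div_eq_iff hsub, inv_eq_sq_of_pow_three_eq_one hb]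
  linear_combination b * hquad - 3 * hb

theorem isPrimitiveRoot_ω : IsPrimitiveRoot ω 3 := by
  simpa [ω] using Complex.isPrimitiveRoot_exp 3 (by norm_num)

theorem ωz_eq_zmodChar (k : ZMod 3) :
    ωz k = AddChar.zmodChar 3 isPrimitiveRoot_ω.pow_eq_one k :=
  rfl

theorem ωz_add (a b : ZMod 3) : ωz (a + b) = ωz a * ωz b := by
  simp only [ωz_eq_zmodChar, AddChar.map_add_eq_mul]

theorem ωz_neg (a : ZMod 3) : ωz (-a) = (ωz a)⁻¹ := by
  simp only [ωz_eq_zmodChar, AddChar.map_neg_eq_inv]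

theorem ωz_sub (a b : ZMod 3) : ωz (a - b) = ωz a * (ωz b)⁻¹ := by
  rw [sub_eq_add_neg, ωz_add, ωz_neg]

theorem ωz_pow_three (a : ZMod 3) : ωz a ^ 3 = 1 := by
  rw [ωz, pow_right_comm, isPrimitiveRoot_ω.pow_eq_one, one_pow]

theorem ωz_injective : Function.Injective ωz := fun a b h ↦
  ZMod.val_injective 3 (isPrimitiveRoot_ω.pow_inj a.val_lt b.val_lt h)

theorem sum_ωz : ∑ k : ZMod 3, ωz k = 0 :=
  (Fin.sum_univ_eq_sum_range (ω ^ ·) 3).trans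
    (isPrimitiveRoot_ω.geom_sum_eq_zero (by norm_num))

theorem W_eq_vandermonde : W = Matrix.vandermonde fun i : Fin 3 ↦ ω ^ (i : ℕ) := by
  have hω_sq_sq : ω = (ω ^ 2) ^ 2 := by linear_combination -ω * isPrimitiveRoot_ω.pow_eq_one
  ext i j
  fin_cases i <;> fin_cases j <;> simp [W, Matrix.vandermonde_apply, ← hω_sq_sq]

theorem isUnit_det_W : IsUnit W.det := by
  rw [isUnit_iff_ne_zero, W_eq_vandermonde, Matrix.det_vandermonde_ne_zero_iff]
  exact fun i j h ↦ Fin.ext (isPrimitiveRoot_ω.pow_inj i.isLt j.isLt h)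

theorem J_mul_apply (A : Matrix (Fin 3) (Fin 3) ℂ) (i j : Fin 3) : (J * A) i j = A (i + 1) j := by
  fin_cases i <;> simp [J, Matrix.mul_apply, Fin.sum_univ_three]

theorem ω_pow_val_add_one (i : Fin 3) : ω ^ ((i + 1 : Fin 3) : ℕ) = ω ^ (i : ℕ) * ω := by
  rw [Fin.val_add, ← pow_eq_pow_mod _ isPrimitiveRoot_ω.pow_eq_one, Fin.val_one, pow_succ]

theorem semiconjBy_W_diagonal_J :
    SemiconjBy W (Matrix.diagonal fun j : Fin 3 ↦ ω ^ (j : ℕ)) J := by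
  ext i j
  rw [J_mul_apply, Matrix.mul_diagonal, W_eq_vandermonde, Matrix.vandermonde_apply,
    Matrix.vandermonde_apply, ω_pow_val_add_one, mul_pow]

theorem Jz_eq_S (k : ZMod 3) : Jz k = S (ωz (-k)) (ωz k) := by
  have hsq : ωz (-k) = ωz k ^ 2 := by
    rw [ωz_neg, inv_eq_sq_of_pow_three_eq_one (ωz_pow_three k)]
  have heigen : ![1, ωz k, ωz (-k)] = (fun j : Fin 3 ↦ ω ^ (j : ℕ)) ^ k.val := by
    ext j
    fin_cases j
    · simp
    · simp [ωz]
    · exact hsq.trans (pow_right_comm ω k.val 2)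
  rw [S, heigen, ← Matrix.diagonal_pow, (semiconjBy_W_diagonal_J.pow_right k.val).eq,
    Matrix.mul_nonsing_inv_cancel_right _ _ isUnit_det_W, Jz]

theorem sum_smul_S {ι : Type*} (s : Finset ι) (c a b : ι → ℂ) (hc : ∑ i ∈ s, c i = 1) :
    ∑ i ∈ s, c i • S (a i) (b i) = S (∑ i ∈ s, c i * a i) (∑ i ∈ s, c i * b i) := by
  have hdiag : Matrix.diagonal ![1, ∑ i ∈ s, c i * b i, ∑ i ∈ s, c i * a i] =
      ∑ i ∈ s, c i • Matrix.diagonal ![1, b i, a i] := by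
    ext j k
    fin_cases j <;> fin_cases k <;> simp [Matrix.sum_apply, hc]
  simp only [S, hdiag, Matrix.mul_sum, Matrix.sum_mul, Matrix.mul_smul, Matrix.smul_mul]

theorem smul_S_add_smul_S {c d : ℂ} (hcd : c + d = 1) (a₀ b₀ a₁ b₁ : ℂ) :
    c • S a₀ b₀ + d • S a₁ b₁ = S (c * a₀ + d * a₁) (c * b₀ + d * b₁) := by
  simpa [Fin.sum_univ_two] using
    sum_smul_S Finset.univ ![c, d] ![a₀, a₁] ![b₀, b₁] (by simpa [Fin.sum_univ_two] using hcd)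

/-- The second eigenvalue `η₁` of the median operator `M^{wx/yz}[η, η']`, with `η` in place of
`η'`. The third eigenvalue `η₀` is obtained from the same formula by negating `w, x, y, z`. -/
noncomputable def medianEigenvalue (η : ℂ) (w x y z : ZMod 3) : ℂ :=
  (η * ωz x - ωz w) / (ωz z - ωz y)

theorem M_eq_S (η η' : ℂ) (w x y z : ZMod 3) :
    M η η' w x y z =
      S (medianEigenvalue η (-w) (-x) (-y) (-z)) (medianEigenvalue η' w x y z) :=
  rfl

theorem sum_medianEigenvalue (η : ℂ) (w y z : ZMod 3) :
    ∑ x, medianEigenvalue η w x y z = ωz w * (3 / (ωz y - ωz z)) := by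
  calc ∑ x, medianEigenvalue η w x y z
      = (η * ∑ x, ωz x - 3 * ωz w) / (ωz z - ωz y) := by
        simp [medianEigenvalue, ← Finset.sum_div, Finset.mul_sum]
    _ = ωz w * (3 / (ωz y - ωz z)) := by
        rw [sum_ωz, mul_zero, zero_sub, ← neg_sub (ωz y), neg_div_neg_eq, mul_div_left_comm,
          mul_div_assoc]

theorem average_medianEigenvalue (η : ℂ) (w : ZMod 3) {y z : ZMod 3} (hyz : y ≠ z) :
    ∑ x, 1 / 3 * medianEigenvalue η w x y z =
      1 / 3 * ωz (w + y + z) + 2 / 3 * ωz (w - y) := by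
  rw [← Finset.mul_sum, sum_medianEigenvalue,
    three_div_sub_of_pow_three_eq_one (ωz_pow_three y) (ωz_pow_three z) (ωz_injective.ne hyz),
    ωz_sub, ωz_add, ωz_add]
  ring

theorem average_medianEigenvalue_neg (η : ℂ) (w : ZMod 3) {y z : ZMod 3} (hyz : y ≠ z) :
    ∑ x, 1 / 3 * medianEigenvalue η (-w) (-x) (-y) (-z) =
      1 / 3 * ωz (-(w + y + z)) + 2 / 3 * ωz (-(w - y)) := by
  calc ∑ x, 1 / 3 * medianEigenvalue η (-w) (-x) (-y) (-z)
      = ∑ x, 1 / 3 * medianEigenvalue η (-w) x (-y) (-z) :=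
        Equiv.sum_comp (Equiv.neg (ZMod 3)) fun x ↦
          1 / 3 * medianEigenvalue η (-w) x (-y) (-z)
    _ = 1 / 3 * ωz (-w + -y + -z) + 2 / 3 * ωz (-w - -y) :=
        average_medianEigenvalue η (-w) (neg_injective.ne hyz)
    _ = 1 / 3 * ωz (-(w + y + z)) + 2 / 3 * ωz (-(w - y)) := by
        congr 3 <;> ring

theorem median_average_over_x (η η' : ℂ) (w y z : ZMod 3) (hyz : y ≠ z) :
    (1/3 : ℂ) • (M η η' w 0 y z + M η η' w 1 y z + M η η' w 2 y z) =
      (1/3 : ℂ) • Jz (w + y + z) + (2/3 : ℂ) • Jz (w - y) := by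
  calc (1/3 : ℂ) • (M η η' w 0 y z + M η η' w 1 y z + M η η' w 2 y z)
      = ∑ x, (1/3 : ℂ) • M η η' w x y z := by
        rw [← Finset.smul_sum]
        exact congrArg _ (Fin.sum_univ_three fun x ↦ M η η' w x y z).symm
    _ = S (∑ x, 1/3 * medianEigenvalue η (-w) (-x) (-y) (-z))
          (∑ x, 1/3 * medianEigenvalue η' w x y z) := by
        simp only [M_eq_S]
        exact sum_smul_S _ _ _ _ (by simp)
    _ = S (1/3 * ωz (-(w + y + z)) + 2/3 * ωz (-(w - y)))
          (1/3 * ωz (w + y + z) + 2/3 * ωz (w - y)) := by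
        rw [average_medianEigenvalue_neg η w hyz, average_medianEigenvalue η' w hyz]
    _ = (1/3 : ℂ) • Jz (w + y + z) + (2/3 : ℂ) • Jz (w - y) := by
        rw [Jz_eq_S, Jz_eq_S, smul_S_add_smul_S (by norm_num)]
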